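/- Let w : {1,…,n} → ℝ with w(j) > 0 for all j be a welfare basis function and f : {1,…,n} → ℝ with f(1) > 0; set f(0) = w(0) = f(n+1) = w(n+1) = 0. Let W* be the supremum of Σ_{(a,x,b)∈I} w(b+x)·θ(a,x,b) over all θ : I → ℝ with θ(a,x,b) ≥ 0 for all (a,x,b) ∈ I, satisfying Σ_{(a,x,b)∈I} [a·f(a+x) − b·f(a+x+1)]·θ(a,x,b) ≥ 0 and Σ_{(a,x,b)∈I} w(a+x)·θ(a,x,b) = 1. Then W* is finite, the supremum is attained, and PoA(f,w,n) = 1/W*. -/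

import Mathlib

/-!
The price of anarchy is the reciprocal of the value of a linear program over resource types.
Given an equilibrium `e` and another allocation `o` of a game, each resource has a type `(a,x,b)`:
the numbers of agents using it only in `e`, in both, and only in `o`. Putting the total value of
the resources of type `p` into `θ p`, the two welfares become the normalization and the objective
of the program, and the sum over agents of the Nash inequalities against `o` becomes its
equilibrium constraint (`RAGame.sum_utility_sub`). Hence every ratio of equilibrium to optimal
welfare is at least `1/W*` (`RAGame.welfare_le_mul`). Equilibria always exist, because Rosenthal's
potential is exact (`RAGame.exists_isNash`), so the infimum over equilibria is never one over the
empty set.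

The bound is tight: an optimal `θ` is realized by a game in which the value `θ p` is spread evenly
over `n` resources placed on a cycle, the `n` agents being rotated copies of one another
(`cyclicGame`). By symmetry the averaged equilibrium constraint is the Nash condition of each agent
(`cyclic_isNash`).

An optimal `θ` exists by compactness (`exists_optimal`). Boundedness uses `f 1 > 0`: the total mass
of `θ` is controlled by the normalization and the equilibrium constraint (`mass_bound`), since
types with `a + x = 0`, which the normalization does not see, have equilibrium coefficient
`-b f(1) < 0`.
-/

/-- A resource allocation game with at most `n` agents: a finite resource set `R`,
a nonnegative value `v r` for each resource, `m ≤ n` agents, and for each agent a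
nonempty finite collection of admissible choices (subsets of `R`). -/
structure RAGame (n : ℕ) where
  R : Type
  [fintypeR : Fintype R]
  [decEqR : DecidableEq R]
  v : R → ℝ
  v_nonneg : ∀ r, 0 ≤ v r
  m : ℕ
  m_le : m ≤ n
  A : Fin m → Finset (Finset R)
  A_ne : ∀ i, (A i).Nonempty

attribute [instance] RAGame.fintypeR RAGame.decEqR

namespace RAGame

variable {n : ℕ}

/-- An allocation: each agent selects an admissible choice. -/
def Alloc (G : RAGame n) : Type := (i : Fin G.m) → {s : Finset G.R // s ∈ G.A i}

/-- `|a|_r`: the number of agents selecting resource `r` in allocation `a`. -/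
def count (G : RAGame n) (a : G.Alloc) (r : G.R) : ℕ :=
  (Finset.univ.filter fun i => r ∈ (a i).val).card

/-- The welfare `W(a) = Σ_{r covered} v_r · w(|a|_r)`. -/
def welfare (G : RAGame n) (w : ℕ → ℝ) (a : G.Alloc) : ℝ :=
  ∑ r ∈ Finset.univ.filter (fun r => 0 < G.count a r), G.v r * w (G.count a r)

/-- Agent `i`'s utility `U_i(a) = Σ_{r ∈ a_i} v_r · f(|a|_r)`. -/
def utility (G : RAGame n) (f : ℕ → ℝ) (a : G.Alloc) (i : Fin G.m) : ℝ :=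
  ∑ r ∈ (a i).val, G.v r * f (G.count a r)

/-- Pure Nash equilibrium: no unilateral deviation improves an agent's utility. -/
def IsNash (G : RAGame n) (f : ℕ → ℝ) (a : G.Alloc) : Prop :=
  ∀ (i : Fin G.m) (s : {s : Finset G.R // s ∈ G.A i}),
    G.utility f (Function.update a i s) i ≤ G.utility f a i

/-- The optimal welfare `max_{a ∈ A} W(a)`. -/
noncomputable def optVal (G : RAGame n) (w : ℕ → ℝ) : ℝ :=
  sSup { x : ℝ | ∃ a : G.Alloc, x = G.welfare w a }

/-- The worst equilibrium welfare `min_{a ∈ NE(G)} W(a)`. -/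
noncomputable def worstNash (G : RAGame n) (f w : ℕ → ℝ) : ℝ :=
  sInf { x : ℝ | ∃ a : G.Alloc, G.IsNash f a ∧ x = G.welfare w a }

end RAGame

/-- The price of anarchy `PoA(f,w,n)` over the class `G_{f,w}^n` of games with at
most `n` agents and strictly positive optimal welfare. -/
noncomputable def PoA (f w : ℕ → ℝ) (n : ℕ) : ℝ :=
  sInf { x : ℝ | ∃ G : RAGame n, 0 < G.optVal w ∧ x = G.worstNash f w / G.optVal w }

/-- The index set `I = {(a,x,b) ∈ ℕ³ : 1 ≤ a+x+b ≤ n}`. -/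
def indexSet (n : ℕ) : Finset (ℕ × ℕ × ℕ) :=
  ((Finset.range (n+1)) ×ˢ (Finset.range (n+1)) ×ˢ (Finset.range (n+1))).filter
    (fun p => 1 ≤ p.1 + p.2.1 + p.2.2 ∧ p.1 + p.2.1 + p.2.2 ≤ n)

/-- The reduced index set `I_R = {(a,x,b) ∈ I : a·x·b = 0 or a+x+b = n}`. -/
def indexSetR (n : ℕ) : Finset (ℕ × ℕ × ℕ) :=
  (indexSet n).filter (fun p => p.1 * p.2.1 * p.2.2 = 0 ∨ p.1 + p.2.1 + p.2.2 = n)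

/-- Feasibility for the primal linear program (6):
`θ ≥ 0`, `Σ [a f(a+x) − b f(a+x+1)] θ(a,x,b) ≥ 0`, `Σ w(a+x) θ(a,x,b) = 1`. -/
def PrimalFeasible (f w : ℕ → ℝ) (n : ℕ) (θ : ℕ × ℕ × ℕ → ℝ) : Prop :=
  (∀ p ∈ indexSet n, 0 ≤ θ p) ∧
  0 ≤ ∑ p ∈ indexSet n,
      ((p.1 : ℝ) * f (p.1 + p.2.1) - (p.2.2 : ℝ) * f (p.1 + p.2.1 + 1)) * θ p ∧
  ∑ p ∈ indexSet n, w (p.1 + p.2.1) * θ p = 1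

/-- Objective of the primal linear program: `Σ w(b+x) θ(a,x,b)`. -/
def primalObj (w : ℕ → ℝ) (n : ℕ) (θ : ℕ × ℕ × ℕ → ℝ) : ℝ :=
  ∑ p ∈ indexSet n, w (p.2.2 + p.2.1) * θ p

/-- The dual constraint at index `(a,x,b)`:
`w(b+x) − μ w(a+x) + λ [a f(a+x) − b f(a+x+1)] ≤ 0`. -/
def DualConstr (f w : ℕ → ℝ) (lam mu : ℝ) (p : ℕ × ℕ × ℕ) : Prop :=
  w (p.2.2 + p.2.1) - mu * w (p.1 + p.2.1) +
      lam * ((p.1 : ℝ) * f (p.1 + p.2.1) - (p.2.2 : ℝ) * f (p.1 + p.2.1 + 1)) ≤ 0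

/-! ### Bounds on the linear program -/

/-- The coefficient `a f(a+x) − b f(a+x+1)` of the equilibrium constraint. -/
def nashCoeff (f : ℕ → ℝ) (p : ℕ × ℕ × ℕ) : ℝ :=
  (p.1 : ℝ) * f (p.1 + p.2.1) - (p.2.2 : ℝ) * f (p.1 + p.2.1 + 1)

lemma mem_indexSet {n : ℕ} {p : ℕ × ℕ × ℕ} :
    p ∈ indexSet n ↔ 1 ≤ p.1 + p.2.1 + p.2.2 ∧ p.1 + p.2.1 + p.2.2 ≤ n := by
  simp only [indexSet, Finset.mem_filter, Finset.mem_product, Finset.mem_range]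
  omega

/-- A suitable multiple of the normalization row dominates the equilibrium row plus the
constant `f 1`: where `a + x ≥ 1` the weight `w (a+x)` is positive, and where `a + x = 0` the
equilibrium coefficient is at most `-f 1`. -/
lemma exists_mass_multiplier (n : ℕ) (w f : ℕ → ℝ)
    (hw : ∀ j, 1 ≤ j → j ≤ n → 0 < w j) (hw0 : w 0 = 0) (hf1 : 0 < f 1) :
    ∃ K : ℝ, 0 ≤ K ∧ ∀ p ∈ indexSet n, f 1 + nashCoeff f p ≤ K * w (p.1 + p.2.1) := by
  have hterm : ∀ p ∈ indexSet n, 0 ≤ |f 1 + nashCoeff f p| / w (p.1 + p.2.1) := by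
    intro p hp
    rw [mem_indexSet] at hp
    rcases Nat.eq_zero_or_pos (p.1 + p.2.1) with h | h
    · simp [h, hw0]
    · exact div_nonneg (abs_nonneg _) (hw _ h (by omega)).le
  refine ⟨∑ p ∈ indexSet n, |f 1 + nashCoeff f p| / w (p.1 + p.2.1),
    Finset.sum_nonneg hterm, fun p hp => ?_⟩
  have hle := Finset.single_le_sum hterm hp
  rw [mem_indexSet] at hp
  rcases Nat.eq_zero_or_pos (p.1 + p.2.1) with h | h
  · have hb : (1 : ℝ) ≤ p.2.2 := by exact_mod_cast (by omega : 1 ≤ p.2.2)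
    have ha : p.1 = 0 := by omega
    rw [h, hw0, mul_zero, nashCoeff, h, ha]
    simp only [Nat.cast_zero, zero_mul, zero_add]
    nlinarith
  · have hpos := hw _ h (by omega)
    exact (le_abs_self _).trans ((div_le_iff₀ hpos).1 hle)

lemma mass_bound {n : ℕ} {w f : ℕ → ℝ} {K : ℝ} {θ : ℕ × ℕ × ℕ → ℝ}
    (hK : ∀ p ∈ indexSet n, f 1 + nashCoeff f p ≤ K * w (p.1 + p.2.1))
    (hθ : ∀ p ∈ indexSet n, 0 ≤ θ p)
    (hc : 0 ≤ ∑ p ∈ indexSet n, nashCoeff f p * θ p) :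
    f 1 * ∑ p ∈ indexSet n, θ p ≤ K * ∑ p ∈ indexSet n, w (p.1 + p.2.1) * θ p := by
  have h : ∑ p ∈ indexSet n, (f 1 * θ p + nashCoeff f p * θ p) ≤
      ∑ p ∈ indexSet n, K * (w (p.1 + p.2.1) * θ p) :=
    Finset.sum_le_sum fun p hp => by nlinarith [hK p hp, hθ p hp]
  rw [Finset.sum_add_distrib, ← Finset.mul_sum, ← Finset.mul_sum] at h
  linarith

/-- The program attains its maximum: after setting `θ` to zero off the index set, the feasible
points form a nonempty compact set. -/
lemma exists_optimal (n : ℕ) (w f : ℕ → ℝ) (hn : 1 ≤ n)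
    (hw : ∀ j, 1 ≤ j → j ≤ n → 0 < w j) (hw0 : w 0 = 0) (hf1 : 0 < f 1) :
    ∃ θ, PrimalFeasible f w n θ ∧ 1 ≤ primalObj w n θ ∧
      ∀ θ', PrimalFeasible f w n θ' → primalObj w n θ' ≤ primalObj w n θ := by
  obtain ⟨K, hK0, hK⟩ := exists_mass_multiplier n w f hw hw0 hf1
  let B : Set (ℕ × ℕ × ℕ → ℝ) :=
    Set.univ.pi fun p => if p ∈ indexSet n then Set.Icc 0 (K / f 1) else {0}
  have hB : IsCompact B := isCompact_univ_pi fun p => by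
    split_ifs
    · exact isCompact_Icc
    · exact isCompact_singleton
  have hcl : IsClosed {θ | PrimalFeasible f w n θ} := by
    have h1 : IsClosed {θ : ℕ × ℕ × ℕ → ℝ | ∀ p ∈ indexSet n, 0 ≤ θ p} := by
      simp only [Set.ofPred_forall]
      exact isClosed_iInter fun p => isClosed_iInter fun _ =>
        isClosed_le continuous_const (continuous_apply p)
    have h2 : IsClosed {θ : ℕ × ℕ × ℕ → ℝ | 0 ≤ ∑ p ∈ indexSet n,
        ((p.1 : ℝ) * f (p.1 + p.2.1) - (p.2.2 : ℝ) * f (p.1 + p.2.1 + 1)) * θ p} :=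
      isClosed_le continuous_const (by fun_prop)
    have h3 : IsClosed {θ : ℕ × ℕ × ℕ → ℝ | ∑ p ∈ indexSet n, w (p.1 + p.2.1) * θ p = 1} :=
      isClosed_eq (by fun_prop) continuous_const
    exact h1.inter (h2.inter h3)
  have hcont : Continuous (primalObj w n) := by
    unfold primalObj
    fun_prop
  -- Truncation to the index set changes neither feasibility nor the objective.
  have key : ∀ θ, PrimalFeasible f w n θ →
      ∃ θ' ∈ B ∩ {θ | PrimalFeasible f w n θ}, primalObj w n θ' = primalObj w n θ := by
    intro θ hθ
    have hcongr : ∀ g : ℕ × ℕ × ℕ → ℝ,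
        ∑ p ∈ indexSet n, g p * (if p ∈ indexSet n then θ p else 0) =
          ∑ p ∈ indexSet n, g p * θ p :=
      fun g => Finset.sum_congr rfl fun p hp => by rw [if_pos hp]
    refine ⟨fun p => if p ∈ indexSet n then θ p else 0, ⟨?_, ?_, ?_, ?_⟩, hcongr _⟩
    · intro p _
      by_cases hp : p ∈ indexSet n
      · simp only [hp, if_true]
        refine ⟨hθ.1 p hp, ?_⟩
        rw [le_div_iff₀ hf1]
        have h1 := mass_bound hK hθ.1 hθ.2.1
        rw [hθ.2.2] at h1
        have h2 := Finset.single_le_sum hθ.1 hp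
        nlinarith
      · simp [hp]
    · intro p hp
      simpa [hp] using hθ.1 p hp
    · rw [hcongr]; exact hθ.2.1
    · rw [hcongr]; exact hθ.2.2
  -- All mass on `(0,1,0)`: equilibrium and optimum coincide.
  have hw1 := hw 1 le_rfl hn
  have hmem : ((0, 1, 0) : ℕ × ℕ × ℕ) ∈ indexSet n := mem_indexSet.2 (by simpa using hn)
  have hstart : ∀ g : ℕ × ℕ × ℕ → ℝ,
      ∑ p ∈ indexSet n, g p * (if p = (0, 1, 0) then (w 1)⁻¹ else 0) =
        g (0, 1, 0) * (w 1)⁻¹ := by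
    intro g
    simp only [mul_ite, mul_zero, Finset.sum_ite_eq', hmem, if_true]
  have hfeas : PrimalFeasible f w n (fun p => if p = (0, 1, 0) then (w 1)⁻¹ else 0) := by
    refine ⟨fun p _ => ?_, ?_, ?_⟩
    · dsimp only
      split_ifs
      · exact (inv_pos.2 hw1).le
      · exact le_rfl
    · rw [hstart]; simp
    · rw [hstart]; simpa using mul_inv_cancel₀ hw1.ne'
  have hone : primalObj w n (fun p => if p = (0, 1, 0) then (w 1)⁻¹ else 0) = 1 := by
    rw [primalObj, hstart]; simpa using mul_inv_cancel₀ hw1.ne'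
  obtain ⟨θ₀, hθ₀, -⟩ := key _ hfeas
  obtain ⟨θ, hθ, hmax⟩ := (hB.inter_right hcl).exists_isMaxOn ⟨θ₀, hθ₀⟩ hcont.continuousOn
  have hall : ∀ θ', PrimalFeasible f w n θ' → primalObj w n θ' ≤ primalObj w n θ := by
    intro θ' h'
    obtain ⟨θ'', h'', he⟩ := key θ' h'
    rw [← he]
    exact hmax h''
  exact ⟨θ, hθ.2, hone ▸ hall _ hfeas, hall⟩

/-- Homogeneous form of optimality, without the normalization constraint. If the normalizing
sum vanishes, `mass_bound` forces `θ = 0`. -/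
lemma obj_le_of_cone {n : ℕ} {w f : ℕ → ℝ} {V : ℝ}
    (hw : ∀ j, 1 ≤ j → j ≤ n → 0 < w j) (hw0 : w 0 = 0) (hf1 : 0 < f 1)
    (hV : ∀ θ, PrimalFeasible f w n θ → primalObj w n θ ≤ V)
    {θ : ℕ × ℕ × ℕ → ℝ} (hθ : ∀ p ∈ indexSet n, 0 ≤ θ p)
    (hc : 0 ≤ ∑ p ∈ indexSet n, nashCoeff f p * θ p) :
    primalObj w n θ ≤ V * ∑ p ∈ indexSet n, w (p.1 + p.2.1) * θ p := by
  obtain ⟨K, -, hK⟩ := exists_mass_multiplier n w f hw hw0 hf1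
  have hmass := mass_bound hK hθ hc
  set T := ∑ p ∈ indexSet n, w (p.1 + p.2.1) * θ p with hT
  have hT0 : 0 ≤ T := Finset.sum_nonneg fun p hp => by
    refine mul_nonneg ?_ (hθ p hp)
    rw [mem_indexSet] at hp
    rcases Nat.eq_zero_or_pos (p.1 + p.2.1) with h | h
    · rw [h, hw0]
    · exact (hw _ h (by omega)).le
  rcases hT0.eq_or_lt with h | h
  · rw [← h, mul_zero] at hmass ⊢
    have hs : ∑ p ∈ indexSet n, θ p = 0 :=
      le_antisymm (by nlinarith) (Finset.sum_nonneg hθ)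
    rw [Finset.sum_eq_zero_iff_of_nonneg hθ] at hs
    exact (Finset.sum_eq_zero fun p hp => by rw [hs p hp, mul_zero]).le
  · have hscale : ∀ g : ℕ × ℕ × ℕ → ℝ,
        ∑ p ∈ indexSet n, g p * (θ p / T) = (∑ p ∈ indexSet n, g p * θ p) / T := by
      intro g
      rw [Finset.sum_div]
      exact Finset.sum_congr rfl fun p _ => by rw [mul_div_assoc]
    have hobj : primalObj w n (fun p => θ p / T) = primalObj w n θ / T := hscale _
    have := hV (fun p => θ p / T) ⟨fun p hp => div_nonneg (hθ p hp) hT0,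
      by rw [hscale]; exact div_nonneg hc hT0, by rw [hscale, ← hT, div_self h.ne']⟩
    rwa [hobj, div_le_iff₀ h] at this

/-! ### Games: deviations and existence of equilibria -/

namespace RAGame

variable {n : ℕ}

/-- The number of agents other than `i` selecting resource `r`. -/
def others (G : RAGame n) (a : G.Alloc) (i : Fin G.m) (r : G.R) : ℕ :=
  (Finset.univ.filter fun j => j ≠ i ∧ r ∈ (a j).val).card

/-- The allocation after agent `i` deviates from `a` to `s`. Packaging the update as an `Alloc`
lets lemmas about allocations rewrite it. -/
def dev (G : RAGame n) (a : G.Alloc) (i : Fin G.m) (s : {s : Finset G.R // s ∈ G.A i}) :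
    G.Alloc := Function.update a i s

lemma dev_self (G : RAGame n) (a : G.Alloc) (i : Fin G.m)
    (s : {s : Finset G.R // s ∈ G.A i}) : G.dev a i s i = s :=
  Function.update_self _ _ _

lemma dev_of_ne (G : RAGame n) (a : G.Alloc) {i j : Fin G.m} (h : j ≠ i)
    (s : {s : Finset G.R // s ∈ G.A i}) : G.dev a i s j = a j :=
  Function.update_of_ne h _ _

lemma others_dev (G : RAGame n) (a : G.Alloc) (i : Fin G.m)
    (s : {s : Finset G.R // s ∈ G.A i}) (r : G.R) :
    G.others (G.dev a i s) i r = G.others a i r := by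
  unfold others
  congr 1
  ext j
  simp only [Finset.mem_filter, Finset.mem_univ, true_and]
  refine and_congr_right fun hj => ?_
  rw [G.dev_of_ne a hj]

lemma count_eq (G : RAGame n) (a : G.Alloc) (i : Fin G.m) (r : G.R) :
    G.count a r = G.others a i r + if r ∈ (a i).val then 1 else 0 := by
  unfold count others
  split_ifs with h
  · rw [← Finset.card_erase_add_one (a := i) (by simpa using h)]
    congr 2
    ext j
    simp
  · rw [add_zero]
    congr 1
    ext j
    simp only [Finset.mem_filter, Finset.mem_univ, true_and]
    refine ⟨fun hj => ⟨?_, hj⟩, fun hj => hj.2⟩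
    rintro rfl
    exact h hj

lemma utility_eq (G : RAGame n) (f : ℕ → ℝ) (a : G.Alloc) (i : Fin G.m) :
    G.utility f a i =
      ∑ r, G.v r * if r ∈ (a i).val then f (G.others a i r + 1) else 0 := by
  unfold utility
  rw [← Finset.sum_subset (Finset.subset_univ (a i).val)]
  · refine Finset.sum_congr rfl fun r hr => ?_
    rw [G.count_eq a i r, if_pos hr, if_pos hr]
  · intro r _ hr
    rw [if_neg hr, mul_zero]

lemma welfare_eq (G : RAGame n) {w : ℕ → ℝ} (hw0 : w 0 = 0) (a : G.Alloc) :
    G.welfare w a = ∑ r, G.v r * w (G.count a r) := by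
  unfold welfare
  refine Finset.sum_subset (Finset.subset_univ _) fun r _ hr => ?_
  have : G.count a r = 0 := by simpa using hr
  rw [this, hw0, mul_zero]

/-- Loss of agent `i` when deviating to `s`: resources abandoned minus resources joined. -/
lemma utility_sub (G : RAGame n) (f : ℕ → ℝ) (a : G.Alloc) (i : Fin G.m)
    (s : {s : Finset G.R // s ∈ G.A i}) :
    G.utility f a i - G.utility f (G.dev a i s) i =
      ∑ r, G.v r * ((if r ∈ (a i).val ∧ r ∉ s.val then f (G.count a r) else 0) -
        if r ∈ s.val ∧ r ∉ (a i).val then f (G.count a r + 1) else 0) := by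
  rw [utility_eq, utility_eq, ← Finset.sum_sub_distrib]
  refine Finset.sum_congr rfl fun r _ => ?_
  rw [others_dev, dev_self, G.count_eq a i r]
  by_cases h1 : r ∈ (a i).val <;> by_cases h2 : r ∈ s.val <;> simp [h1, h2]

/-- Rosenthal's potential. -/
def potential (G : RAGame n) (f : ℕ → ℝ) (a : G.Alloc) : ℝ :=
  ∑ r, G.v r * ∑ j ∈ Finset.range (G.count a r), f (j + 1)

lemma potential_eq (G : RAGame n) (f : ℕ → ℝ) (a : G.Alloc) (i : Fin G.m) :
    G.potential f a = G.utility f a i +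
      ∑ r, G.v r * ∑ j ∈ Finset.range (G.others a i r), f (j + 1) := by
  rw [utility_eq, potential, ← Finset.sum_add_distrib]
  refine Finset.sum_congr rfl fun r _ => ?_
  rw [G.count_eq a i r]
  split_ifs
  · rw [Finset.sum_range_succ]; ring
  · simp

instance (G : RAGame n) : Finite G.Alloc := by unfold Alloc; infer_instance

instance (G : RAGame n) : Nonempty G.Alloc :=
  ⟨fun i => ⟨(G.A_ne i).choose, (G.A_ne i).choose_spec⟩⟩

lemma exists_isNash (G : RAGame n) (f : ℕ → ℝ) : ∃ a : G.Alloc, G.IsNash f a := by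
  obtain ⟨a, ha⟩ := Finite.exists_max (G.potential f)
  refine ⟨a, fun i s => ?_⟩
  change G.utility f (G.dev a i s) i ≤ _
  have h := ha (G.dev a i s)
  rw [G.potential_eq f _ i, G.potential_eq f a i] at h
  simp only [others_dev] at h
  linarith

lemma welfare_le_optVal (G : RAGame n) (w : ℕ → ℝ) (a : G.Alloc) :
    G.welfare w a ≤ G.optVal w := by
  refine le_csSup ?_ ⟨a, rfl⟩
  have : {x : ℝ | ∃ a : G.Alloc, x = G.welfare w a} = Set.range (G.welfare w) := by
    ext x; simp [eq_comm]
  rw [this]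
  exact (Set.finite_range _).bddAbove

lemma worstNash_le (G : RAGame n) {f : ℕ → ℝ} (w : ℕ → ℝ) {a : G.Alloc} (ha : G.IsNash f a) :
    G.worstNash f w ≤ G.welfare w a := by
  refine csInf_le ?_ ⟨a, ha, rfl⟩
  refine ((Set.finite_range (G.welfare w)).subset ?_).bddBelow
  rintro x ⟨a, -, rfl⟩
  exact ⟨a, rfl⟩

/-! ### Every game yields a point of the cone -/

/-- The type `(a,x,b)` of resource `r` relative to two allocations: the numbers of agents that
select it only in `e`, in both, and only in `o`. -/
def rtype (G : RAGame n) (e o : G.Alloc) (r : G.R) : ℕ × ℕ × ℕ :=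
  ((Finset.univ.filter fun i => r ∈ (e i).val ∧ r ∉ (o i).val).card,
   (Finset.univ.filter fun i => r ∈ (e i).val ∧ r ∈ (o i).val).card,
   (Finset.univ.filter fun i => r ∈ (o i).val ∧ r ∉ (e i).val).card)

lemma count_left (G : RAGame n) (e o : G.Alloc) (r : G.R) :
    G.count e r = (G.rtype e o r).1 + (G.rtype e o r).2.1 := by
  unfold count rtype
  rw [add_comm, ← Finset.card_filter_add_card_filter_not (fun i => r ∈ (o i).val),
    Finset.filter_filter, Finset.filter_filter]

lemma count_right (G : RAGame n) (e o : G.Alloc) (r : G.R) :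
    G.count o r = (G.rtype e o r).2.2 + (G.rtype e o r).2.1 := by
  unfold count rtype
  rw [add_comm, ← Finset.card_filter_add_card_filter_not (fun i => r ∈ (e i).val),
    Finset.filter_filter, Finset.filter_filter]
  simp only [and_comm]

lemma rtype_sum_le (G : RAGame n) (e o : G.Alloc) (r : G.R) :
    (G.rtype e o r).1 + (G.rtype e o r).2.1 + (G.rtype e o r).2.2 ≤ n := by
  rw [← count_left]
  unfold count rtype
  rw [← Finset.card_union_of_disjoint]
  · exact (Finset.card_le_univ _).trans (by simpa using G.m_le)
  · rw [Finset.disjoint_left]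
    intro i hi hi'
    simp only [Finset.mem_filter, Finset.mem_univ, true_and] at hi hi'
    exact hi'.2 hi

/-- Summed over agents, the losses of deviating from `e` to `o` regroup by resource type. -/
lemma sum_utility_sub (G : RAGame n) (f : ℕ → ℝ) (e o : G.Alloc) :
    ∑ i, (G.utility f e i - G.utility f (G.dev e i (o i)) i) =
      ∑ r, nashCoeff f (G.rtype e o r) * G.v r := by
  simp only [utility_sub]
  rw [Finset.sum_comm]
  refine Finset.sum_congr rfl fun r _ => ?_
  rw [← Finset.mul_sum, Finset.sum_sub_distrib, ← Finset.sum_filter, ← Finset.sum_filter,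
    Finset.sum_const, Finset.sum_const, mul_comm, G.count_left e o r]
  simp [nashCoeff, rtype]

lemma sum_by_type {R : Type} [Fintype R] (ty : R → ℕ × ℕ × ℕ) (v : R → ℝ)
    (S : Finset (ℕ × ℕ × ℕ)) (g : ℕ × ℕ × ℕ → ℝ) (hg : ∀ r, ty r ∉ S → g (ty r) = 0) :
    ∑ p ∈ S, g p * ∑ r with ty r = p, v r = ∑ r, g (ty r) * v r := by
  simp only [Finset.sum_filter, Finset.mul_sum]
  rw [Finset.sum_comm]
  refine Finset.sum_congr rfl fun r _ => ?_
  simp only [mul_ite, mul_zero, Finset.sum_ite_eq]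
  split_ifs with h
  · rfl
  · rw [hg r h, zero_mul]

/-- Efficiency guarantee: any upper bound `V` for the program bounds the ratio of the welfare of
an arbitrary allocation to that of an equilibrium. -/
lemma welfare_le_mul (G : RAGame n) {f w : ℕ → ℝ} {V : ℝ}
    (hw : ∀ j, 1 ≤ j → j ≤ n → 0 < w j) (hw0 : w 0 = 0) (hf1 : 0 < f 1)
    (hV : ∀ θ, PrimalFeasible f w n θ → primalObj w n θ ≤ V)
    {e : G.Alloc} (he : G.IsNash f e) (o : G.Alloc) :
    G.welfare w o ≤ V * G.welfare w e := by
  let θ : ℕ × ℕ × ℕ → ℝ := fun p => ∑ r with G.rtype e o r = p, G.v r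
  -- Only the type `(0,0,0)` of unused resources lies outside the index set.
  have hzero : ∀ g : ℕ × ℕ × ℕ → ℝ, g (0, 0, 0) = 0 →
      ∑ p ∈ indexSet n, g p * θ p = ∑ r, g (G.rtype e o r) * G.v r := by
    intro g hg
    refine sum_by_type _ _ _ _ fun r hr => ?_
    have hle := G.rtype_sum_le e o r
    rw [mem_indexSet] at hr
    have : G.rtype e o r = (0, 0, 0) := by
      refine Prod.ext ?_ (Prod.ext ?_ ?_) <;> dsimp only <;> omega
    rw [this, hg]
  have hobj : primalObj w n θ = G.welfare w o := by
    rw [primalObj, hzero (fun p => w (p.2.2 + p.2.1)) (by simpa using hw0), welfare_eq G hw0]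
    exact Finset.sum_congr rfl fun r _ => by rw [G.count_right e o r, mul_comm]
  have hnorm : ∑ p ∈ indexSet n, w (p.1 + p.2.1) * θ p = G.welfare w e := by
    rw [hzero (fun p => w (p.1 + p.2.1)) (by simpa using hw0), welfare_eq G hw0]
    exact Finset.sum_congr rfl fun r _ => by rw [G.count_left e o r, mul_comm]
  rw [← hobj, ← hnorm]
  refine obj_le_of_cone hw hw0 hf1 hV (fun p _ => Finset.sum_nonneg fun r _ => G.v_nonneg r) ?_
  rw [hzero _ (by simp [nashCoeff]), ← sum_utility_sub]
  exact Finset.sum_nonneg fun i _ => sub_nonneg.2 (he i (o i))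

end RAGame

/-! ### The cyclic worst-case game -/

section Cyclic

variable {n : ℕ} [NeZero n]

/-- Resources `(p,k)` whose position `k + i` relative to agent `i`, taken modulo `n`, lies in
`[lo p, hi p)`. -/
def arc (lo hi : ℕ × ℕ × ℕ → ℕ) (i : Fin n) : Finset ({p // p ∈ indexSet n} × Fin n) :=
  Finset.univ.filter fun r => lo r.1 ≤ (r.2 + i).val ∧ (r.2 + i).val < hi r.1

/-- The choice of agent `i` in the equilibrium: positions `0, …, a+x-1`. -/
def eqArc (i : Fin n) : Finset ({p // p ∈ indexSet n} × Fin n) :=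
  arc (fun _ => 0) (fun p => p.1 + p.2.1) i

/-- The choice of agent `i` in the optimum: positions `a, …, a+x+b-1`. -/
def optArc (i : Fin n) : Finset ({p // p ∈ indexSet n} × Fin n) :=
  arc (fun p => p.1) (fun p => p.1 + p.2.1 + p.2.2) i

/-- For each `p` in the index set, `n` resources on a cycle, each of value `θ p / n`; each of the
`n` agents chooses between its equilibrium arc and its optimal arc. -/
noncomputable abbrev cyclicGame (θ : ℕ × ℕ × ℕ → ℝ) (hθ : ∀ p ∈ indexSet n, 0 ≤ θ p) :
    RAGame n where
  R := {p // p ∈ indexSet n} × Fin n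
  v := fun r => θ r.1 / n
  v_nonneg := fun r => div_nonneg (hθ _ r.1.2) (Nat.cast_nonneg _)
  m := n
  m_le := le_rfl
  A := fun i => {eqArc i, optArc i}
  A_ne := fun i => ⟨eqArc i, by simp⟩

variable (θ : ℕ × ℕ × ℕ → ℝ) (hθ : ∀ p ∈ indexSet n, 0 ≤ θ p)

/-- All agents choose their equilibrium arc. -/
noncomputable def cyclicEq : (cyclicGame θ hθ).Alloc :=
  fun i => ⟨eqArc (n := n) i, Finset.mem_insert_self _ _⟩

/-- All agents choose their optimal arc. -/
noncomputable def cyclicOpt : (cyclicGame θ hθ).Alloc :=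
  fun i => ⟨optArc (n := n) i, Finset.mem_insert_of_mem (Finset.mem_singleton_self _)⟩

lemma card_arc (lo hi : ℕ) (hhi : hi ≤ n) (k : Fin n) :
    (Finset.univ.filter fun i : Fin n => lo ≤ (k + i).val ∧ (k + i).val < hi).card = hi - lo := by
  rw [← Nat.card_Ico, ← Finset.card_map (Equiv.addLeft k).toEmbedding,
    ← Finset.card_map Fin.valEmbedding]
  congr 1
  ext j
  simp only [Finset.mem_map, Finset.mem_filter, Finset.mem_univ, true_and, Finset.mem_Ico,
    Equiv.coe_toEmbedding, Equiv.coe_addLeft, Fin.valEmbedding_apply]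
  constructor
  · rintro ⟨_, ⟨i, hi, rfl⟩, rfl⟩
    exact hi
  · intro hj
    exact ⟨⟨j, by omega⟩, ⟨⟨j, by omega⟩ - k, by simpa using hj, by simp⟩, rfl⟩

lemma card_arc' (lo hi : ℕ) (hhi : hi ≤ n) (i : Fin n) :
    (Finset.univ.filter fun k : Fin n => lo ≤ (k + i).val ∧ (k + i).val < hi).card = hi - lo := by
  simp only [add_comm _ i]
  exact card_arc lo hi hhi i

lemma cyclic_count_eq (r : (cyclicGame θ hθ).R) :
    (cyclicGame θ hθ).count (cyclicEq θ hθ) r = r.1.1.1 + r.1.1.2.1 := by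
  have h := mem_indexSet.1 r.1.2
  rw [← Nat.sub_zero (r.1.1.1 + r.1.1.2.1), ← card_arc 0 _ (by omega) r.2]
  unfold RAGame.count
  congr 1
  ext i
  simp [cyclicEq, eqArc, arc]

lemma cyclic_count_opt (r : (cyclicGame θ hθ).R) :
    (cyclicGame θ hθ).count (cyclicOpt θ hθ) r = r.1.1.2.2 + r.1.1.2.1 := by
  have h := mem_indexSet.1 r.1.2
  rw [show r.1.1.2.2 + r.1.1.2.1 = (r.1.1.1 + r.1.1.2.1 + r.1.1.2.2) - r.1.1.1 by omega,
    ← card_arc r.1.1.1 _ (by omega) r.2]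
  unfold RAGame.count
  congr 1
  ext i
  simp [cyclicOpt, optArc, arc]

lemma sum_cyclic (g : ℕ × ℕ × ℕ → ℝ) :
    ∑ r : (cyclicGame θ hθ).R, (cyclicGame θ hθ).v r * g r.1 =
      ∑ p ∈ indexSet n, g p * θ p := by
  change ∑ r : {p // p ∈ indexSet n} × Fin n, θ r.1 / n * g r.1 = _
  rw [Fintype.sum_prod_type, ← Finset.sum_coe_sort (indexSet n) fun p => g p * θ p]
  refine Finset.sum_congr rfl fun p _ => ?_
  have : (n : ℝ) ≠ 0 := Nat.cast_ne_zero.2 (NeZero.ne n)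
  simp only [Finset.sum_const, Finset.card_univ, Fintype.card_fin, nsmul_eq_mul]
  field_simp

lemma cyclic_welfare_eq {w : ℕ → ℝ} (hw0 : w 0 = 0) :
    (cyclicGame θ hθ).welfare w (cyclicEq θ hθ) =
      ∑ p ∈ indexSet n, w (p.1 + p.2.1) * θ p := by
  rw [RAGame.welfare_eq _ hw0, ← sum_cyclic θ hθ]
  exact Finset.sum_congr rfl fun r _ => by rw [cyclic_count_eq]

lemma cyclic_welfare_opt {w : ℕ → ℝ} (hw0 : w 0 = 0) :
    (cyclicGame θ hθ).welfare w (cyclicOpt θ hθ) = primalObj w n θ := by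
  rw [RAGame.welfare_eq _ hw0, primalObj, ← sum_cyclic θ hθ]
  exact Finset.sum_congr rfl fun r _ => by rw [cyclic_count_opt]

/-- By rotational symmetry every agent loses exactly `1/n` times the value of the equilibrium
constraint when switching to its optimal arc. -/
lemma cyclic_isNash {f : ℕ → ℝ} (hc : 0 ≤ ∑ p ∈ indexSet n, nashCoeff f p * θ p) :
    (cyclicGame θ hθ).IsNash f (cyclicEq θ hθ) := by
  intro i s
  change (cyclicGame θ hθ).utility f ((cyclicGame θ hθ).dev _ i s) i ≤ _
  rw [← sub_nonneg, RAGame.utility_sub]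
  have hs : s.val = eqArc (n := n) i ∨ s.val = optArc (n := n) i :=
    (Finset.mem_insert.1 s.2).imp_right Finset.mem_singleton.1
  have he : (cyclicEq θ hθ i).val = eqArc (n := n) i := rfl
  rcases hs with hs | hs
  · refine (Finset.sum_eq_zero fun r _ => ?_).ge
    rw [he, hs]
    simp
  · simp only [he, hs, cyclic_count_eq]
    change 0 ≤ ∑ r : {p // p ∈ indexSet n} × Fin n, θ r.1 / n *
      ((if r ∈ eqArc i ∧ r ∉ optArc i then f (r.1.1.1 + r.1.1.2.1) else 0) -
        if r ∈ optArc i ∧ r ∉ eqArc i then f (r.1.1.1 + r.1.1.2.1 + 1) else 0)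
    have key : ∀ p : {p // p ∈ indexSet n}, ∑ k : Fin n, θ p / n *
        ((if (p, k) ∈ eqArc i ∧ (p, k) ∉ optArc i then f (p.1.1 + p.1.2.1) else 0) -
          if (p, k) ∈ optArc i ∧ (p, k) ∉ eqArc i then f (p.1.1 + p.1.2.1 + 1) else 0) =
        nashCoeff f p * θ p / n := by
      rintro ⟨⟨a, x, b⟩, hp⟩
      have hp' := mem_indexSet.1 hp
      dsimp only at hp'
      rw [← Finset.mul_sum, Finset.sum_sub_distrib, ← Finset.sum_filter, ← Finset.sum_filter,
        Finset.sum_const, Finset.sum_const]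
      have h1 : (Finset.univ.filter fun k : Fin n =>
          (⟨(a, x, b), hp⟩, k) ∈ eqArc i ∧ (⟨(a, x, b), hp⟩, k) ∉ optArc i).card = a := by
        conv_rhs => rw [← Nat.sub_zero a, ← card_arc' (n := n) 0 a (by omega) i]
        congr 1
        ext k
        simp only [eqArc, optArc, arc, Finset.mem_filter, Finset.mem_univ, true_and]
        omega
      have h2 : (Finset.univ.filter fun k : Fin n =>
          (⟨(a, x, b), hp⟩, k) ∈ optArc i ∧ (⟨(a, x, b), hp⟩, k) ∉ eqArc i).card = b := by
        conv_rhs => rw [show b = (a + x + b) - (a + x) by omega,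
          ← card_arc' (n := n) (a + x) (a + x + b) (by omega) i]
        congr 1
        ext k
        simp only [eqArc, optArc, arc, Finset.mem_filter, Finset.mem_univ, true_and]
        omega
      rw [h1, h2]
      simp only [nashCoeff, nsmul_eq_mul]
      ring
    rw [Fintype.sum_prod_type]
    simp only [key]
    rw [Finset.sum_coe_sort (indexSet n) (fun p => nashCoeff f p * θ p / n), ← Finset.sum_div]
    exact div_nonneg hc (Nat.cast_nonneg _)

end Cyclic

/-- Theorem 2(ii): if `f(1) > 0` then the value `W*` of the primal linear
program (6) is finite (the set of attainable objective values is bounded above),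
the supremum is attained, and `PoA(f,w,n) = 1/W*`. -/
theorem poa_primal_lp (n : ℕ) (w f : ℕ → ℝ) (hn : 1 ≤ n)
    (hw : ∀ j, 1 ≤ j → j ≤ n → 0 < w j)
    (hw0 : w 0 = 0) (hwn1 : w (n + 1) = 0)
    (hf0 : f 0 = 0) (hfn1 : f (n + 1) = 0)
    (hf1 : 0 < f 1) :
    BddAbove { S : ℝ | ∃ θ : ℕ × ℕ × ℕ → ℝ, PrimalFeasible f w n θ ∧ S = primalObj w n θ } ∧
    (∃ θ : ℕ × ℕ × ℕ → ℝ, PrimalFeasible f w n θ ∧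
      primalObj w n θ =
        sSup { S : ℝ | ∃ θ' : ℕ × ℕ × ℕ → ℝ, PrimalFeasible f w n θ' ∧ S = primalObj w n θ' }) ∧
    PoA f w n =
      1 / sSup { S : ℝ | ∃ θ : ℕ × ℕ × ℕ → ℝ, PrimalFeasible f w n θ ∧ S = primalObj w n θ } := by
  obtain ⟨θ, hθ, hone, hmax⟩ := exists_optimal n w f hn hw hw0 hf1
  have hgreatest : IsGreatest { S : ℝ | ∃ θ : ℕ × ℕ × ℕ → ℝ, PrimalFeasible f w n θ ∧
      S = primalObj w n θ } (primalObj w n θ) := by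
    refine ⟨⟨θ, hθ, rfl⟩, ?_⟩
    rintro S ⟨θ', h', rfl⟩
    exact hmax θ' h'
  rw [hgreatest.csSup_eq]
  refine ⟨⟨_, hgreatest.2⟩, ⟨θ, hθ, rfl⟩, ?_⟩
  have hVpos : 0 < primalObj w n θ := by linarith
  have hlower : ∀ x ∈ { x : ℝ | ∃ G : RAGame n, 0 < G.optVal w ∧
      x = G.worstNash f w / G.optVal w }, 1 / primalObj w n θ ≤ x := by
    rintro x ⟨G, hG, rfl⟩
    rw [div_le_div_iff₀ hVpos hG, one_mul, mul_comm]
    rw [← div_le_iff₀' hVpos]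
    obtain ⟨e₀, he₀⟩ := G.exists_isNash f
    refine le_csInf ⟨_, e₀, he₀, rfl⟩ ?_
    rintro y ⟨e, he, rfl⟩
    rw [div_le_iff₀' hVpos]
    refine csSup_le ⟨_, e, rfl⟩ ?_
    rintro z ⟨o, rfl⟩
    exact G.welfare_le_mul hw hw0 hf1 hmax he o
  have : NeZero n := ⟨by omega⟩
  have hnash : (cyclicGame θ hθ.1).worstNash f w ≤ 1 := by
    have h := (cyclicGame θ hθ.1).worstNash_le w (cyclic_isNash θ hθ.1 hθ.2.1)
    rw [cyclic_welfare_eq θ hθ.1 hw0] at h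
    exact h.trans hθ.2.2.le
  have hopt : primalObj w n θ ≤ (cyclicGame θ hθ.1).optVal w := by
    rw [← cyclic_welfare_opt θ hθ.1 hw0]
    exact RAGame.welfare_le_optVal _ _ _
  have hmem : (cyclicGame θ hθ.1).worstNash f w / (cyclicGame θ hθ.1).optVal w ∈
      { x : ℝ | ∃ G : RAGame n, 0 < G.optVal w ∧ x = G.worstNash f w / G.optVal w } :=
    ⟨_, hVpos.trans_le hopt, rfl⟩
  refine le_antisymm ((csInf_le ⟨_, hlower⟩ hmem).trans ?_) (le_csInf ⟨_, hmem⟩ hlower)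
  exact div_le_div₀ zero_le_one hnash hVpos hopt
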